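/- For q ∈ (0,1), define V(q) = (1−q) q^{L(q)−1} L(q), where L(q) is the unique positive integer with (L(q)−1)/L(q) < q ≤ L(q)/(L(q)+1). Then lim_{q→1⁻} V(q) = 1/e. -/

import Mathlib

open Finset Filter

/-- The number of inversions of a permutation of `Fin n`. -/
def invCount (n : ℕ) (σ : Equiv.Perm (Fin n)) : ℕ :=
  (Finset.univ.filter (fun p : Fin n × Fin n => p.1 < p.2 ∧ σ p.2 < σ p.1)).card

/-- Normalization constant of the Mallows distribution:
`Z_n(q) = ∑_{σ ∈ S_n} q^{inv σ}`. -/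
noncomputable def mallowsZ (n : ℕ) (q : ℝ) : ℝ :=
  ∑ σ : Equiv.Perm (Fin n), q ^ invCount n σ

/-- The Mallows probability of a set `A` of permutations:
`P_n^q(A) = (∑_{σ ∈ A} q^{inv σ}) / Z_n(q)`. -/
noncomputable def mallowsProb (n : ℕ) (q : ℝ) (A : Finset (Equiv.Perm (Fin n))) : ℝ :=
  (∑ σ ∈ A, q ^ invCount n σ) / mallowsZ n q

/-- The success event for the strategy `S(n,M)`.  Positions are indexed by `Fin n`
(the index `i : Fin n` represents the `(i+1)`-st arriving item) and ranks are the
values of `σ` (the value `n-1`, i.e. the top of `Fin n`, represents the highest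
rank `n`).  For `M ≥ 1` the strategy succeeds iff for some position `j` with
`(j:ℕ) ≥ M` (i.e. item number `j+1 ≥ M+1`) the item at position `j` has the top
rank and the maximum rank among the items strictly before position `j` equals the
maximum rank among the first `M` items.  For `M = 0` it succeeds iff the first
item has top rank. -/
def winEvent (n M : ℕ) : Finset (Equiv.Perm (Fin n)) :=
  if M = 0 then
    Finset.univ.filter (fun σ => ∀ i : Fin n, (i : ℕ) = 0 → (σ i : ℕ) = n - 1)
  else
    Finset.univ.filter (fun σ => ∃ j : Fin n, M ≤ (j : ℕ) ∧ (σ j : ℕ) = n - 1 ∧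
      (Finset.univ.filter (fun i : Fin n => i < j)).sup (fun i => (σ i : ℕ)) =
      (Finset.univ.filter (fun i : Fin n => (i : ℕ) < M)).sup (fun i => (σ i : ℕ)))

/-- `𝒫_n^q(S(n,M))`, the success probability of the strategy `S(n,M)` under the
Mallows distribution with parameter `q`. -/
noncomputable def succProb (n M : ℕ) (q : ℝ) : ℝ := mallowsProb n q (winEvent n M)

/-!
The two bounds defining `L` say exactly that `q ≤ (1 - q) L < 1`, so `(1 - q) L → 1` as `q → 1⁻`.
Since `log q ∼ q - 1` at `1`, the exponent `(L - 1) log q` of `q ^ (L - 1)` then tends to `-1`.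
-/

section Field

variable {K : Type*} [Field K] [LinearOrder K] [IsStrictOrderedRing K] {a q : K}

lemma sub_one_div_lt_iff_one_sub_mul_lt_one (ha : 0 < a) :
    (a - 1) / a < q ↔ (1 - q) * a < 1 := by
  rw [div_lt_iff₀ ha, one_sub_mul, sub_lt_comm]

lemma le_div_add_one_iff_le_one_sub_mul (ha : 0 < a + 1) :
    q ≤ a / (a + 1) ↔ q ≤ (1 - q) * a := by
  rw [le_div_iff₀ ha, mul_add_one, one_sub_mul, le_sub_iff_add_le']

end Field

section Limits

open Topology

variable {α : Type*} {l : Filter α} {x y : α → ℝ} {c : ℝ}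

lemma tendsto_one_sub_mul_of_sub_one_div_lt_of_le_div_add_one (hx : Tendsto x l (𝓝 1))
    (hy : ∀ᶠ t in l, 0 < y t) (hlower : ∀ᶠ t in l, (y t - 1) / y t < x t)
    (hupper : ∀ᶠ t in l, x t ≤ y t / (y t + 1)) :
    Tendsto (fun t => (1 - x t) * y t) l (𝓝 1) := by
  refine tendsto_of_tendsto_of_tendsto_of_le_of_le' hx tendsto_const_nhds ?_ ?_
  · filter_upwards [hy, hupper] with t ht hle
    exact (le_div_add_one_iff_le_one_sub_mul (by positivity)).1 hle
  · filter_upwards [hy, hlower] with t ht hlt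
    exact ((sub_one_div_lt_iff_one_sub_mul_lt_one ht).1 hlt).le

lemma tendsto_mul_log_of_tendsto_mul_sub_one (hx : Tendsto x l (𝓝 1))
    (hxy : Tendsto (fun t => y t * (x t - 1)) l (𝓝 c)) :
    Tendsto (fun t => y t * Real.log (x t)) l (𝓝 c) := by
  have hcont : ContinuousAt (dslope Real.log 1) 1 :=
    continuousAt_dslope_same.2 (Real.differentiableAt_log one_ne_zero)
  have hslope : Tendsto (fun t => dslope Real.log 1 (x t)) l (𝓝 1) := by
    simpa [Function.comp_def] using hcont.tendsto.comp hx
  have hlog (s : ℝ) : (s - 1) * dslope Real.log 1 s = Real.log s := by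
    simpa using sub_smul_dslope Real.log 1 s
  simpa only [mul_assoc, hlog, mul_one] using hxy.mul hslope

lemma tendsto_rpow_exp_of_tendsto_mul_sub_one (hx : Tendsto x l (𝓝 1))
    (hxy : Tendsto (fun t => y t * (x t - 1)) l (𝓝 c)) :
    Tendsto (fun t => x t ^ y t) l (𝓝 (Real.exp c)) := by
  refine ((Real.continuous_exp.tendsto c).comp
    (tendsto_mul_log_of_tendsto_mul_sub_one hx hxy)).congr' ?_
  filter_upwards [hx.eventually_const_lt zero_lt_one] with t ht
  rw [Function.comp_apply, Real.rpow_def_of_pos ht, mul_comm]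

end Limits

theorem stmt_13 (L : ℝ → ℕ)
    (hL : ∀ q ∈ Set.Ioo (0 : ℝ) 1, 1 ≤ L q ∧ ((L q : ℝ) - 1) / (L q) < q ∧
      q ≤ (L q : ℝ) / ((L q : ℝ) + 1)) :
    Tendsto (fun q : ℝ => (1 - q) * q ^ (L q - 1) * (L q : ℝ))
      (nhdsWithin 1 (Set.Iio 1)) (nhds (Real.exp 1)⁻¹) := by
  have hq : Tendsto (fun q : ℝ => q) (nhdsWithin 1 (Set.Iio 1)) (nhds 1) :=
    tendsto_nhdsWithin_of_tendsto_nhds tendsto_id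
  have hIoo : Set.Ioo (0 : ℝ) 1 ∈ nhdsWithin 1 (Set.Iio 1) := Ioo_mem_nhdsLT zero_lt_one
  have hmul : Tendsto (fun q : ℝ => (1 - q) * L q) (nhdsWithin 1 (Set.Iio 1)) (nhds 1) := by
    refine tendsto_one_sub_mul_of_sub_one_div_lt_of_le_div_add_one hq ?_ ?_ ?_ <;>
      filter_upwards [hIoo] with q hq01
    · exact_mod_cast (hL q hq01).1
    · exact (hL q hq01).2.1
    · exact (hL q hq01).2.2
  have hexponent : Tendsto (fun q : ℝ => ((L q - 1 : ℕ) : ℝ) * (q - 1))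
      (nhdsWithin 1 (Set.Iio 1)) (nhds (-1)) := by
    have hlim := (hq.const_sub 1).sub hmul
    rw [sub_self, zero_sub] at hlim
    refine hlim.congr' ?_
    filter_upwards [hIoo] with q hq01
    rw [Nat.cast_pred (hL q hq01).1]
    ring
  have hpow := tendsto_rpow_exp_of_tendsto_mul_sub_one hq hexponent
  simpa only [Real.rpow_natCast, Real.exp_neg, one_mul, mul_right_comm] using hmul.mul hpow
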